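/- For the elephant random walk with memory parameter p ∈ (p_d, 1) on a Cayley graph that is the d-regular tree T_d (d ≥ 3), where p_d = (d + 1)/(2d), and for m > 2: if 2 < m < (d − 1)/(d(1 − p)) there exists C > 0 with E|Ξ_n|^m ≤ C · n^{−m·d(1−p)/(d−1)} · log n for all n ≥ 2; if m = (d − 1)/(d(1 − p)) there exists C > 0 with E|Ξ_n|^m ≤ C · n^{−1} · log n for all n ≥ 2; and if m > (d − 1)/(d(1 − p)) there exists C > 0 with E|Ξ_n|^m ≤ C · n^{−1} for all n ≥ 1. -/

import Mathlib

open MeasureTheory ProbabilityTheory Filter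

noncomputable section

/-- The Cayley graph of a group with respect to a finite set of generators. -/
def cayleyGraph {G : Type*} [Group G] (S : Finset G) : SimpleGraph G where
  Adj x y := x ≠ y ∧ (y * x⁻¹ ∈ S ∨ x * y⁻¹ ∈ S)
  symm := by
    constructor
    rintro x y ⟨h1, h2⟩
    refine ⟨h1.symm, ?_⟩
    rcases h2 with h | h
    · exact Or.inr h
    · exact Or.inl h
  loopless := ⟨fun x h => h.1 rfl⟩

/-- The elephant random walk (ERW) with memory parameter `p` on the Cayley graph of a
group `G` with respect to a symmetric generating set `S` of cardinality `d`, not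
containing the identity, whose Cayley graph is a tree (hence the `d`-regular tree
`T_d`).  The steps are `g 1, g 2, …` (the value of `g 0` is irrelevant).  The law of
the process is characterised by: `g 1` is uniform on `S`, and, conditionally on the
first `n` steps being `s 1, …, s n`, the next step `g (n+1)` equals `a ∈ S` with
probability `p * N/n + ((1-p)/(d-1)) * (n-N)/n`, where `N = #{1 ≤ k ≤ n : s k = a}`;
this is precisely the probability that the walker, recalling a uniform past epoch
`D ∈ {1, …, n}`, repeats `g D` with probability `p` and takes any given other step
with probability `(1-p)/(d-1)`. -/
structure ERW (G : Type*) [Group G] [DecidableEq G] (d : ℕ) (p : ℝ)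
    (Ω : Type*) [MeasurableSpace Ω] (P : Measure Ω) where
  S : Finset G
  card_S : S.card = d
  symm_S : ∀ s ∈ S, s⁻¹ ∈ S
  one_not_mem : (1 : G) ∉ S
  tree : (cayleyGraph S).IsTree
  g : ℕ → Ω → G
  meas_g : ∀ n a, MeasurableSet {ω | g n ω = a}
  mem_S : ∀ n, 1 ≤ n → ∀ ω, g n ω ∈ S
  init : ∀ a ∈ S, (P {ω | g 1 ω = a}).toReal = 1 / d
  update : ∀ n, 1 ≤ n → ∀ s : ℕ → G, ∀ a ∈ S,
    (P ({ω | ∀ k ∈ Finset.Icc 1 n, g k ω = s k} ∩ {ω | g (n + 1) ω = a})).toReal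
      = (p * ((((Finset.Icc 1 n).filter fun k => s k = a).card : ℝ) / n)
          + (1 - p) / ((d : ℝ) - 1)
            * (((n : ℝ) - (((Finset.Icc 1 n).filter fun k => s k = a).card : ℝ)) / n))
        * (P {ω | ∀ k ∈ Finset.Icc 1 n, g k ω = s k}).toReal

namespace ERW

variable {G : Type*} [Group G] [DecidableEq G] {d : ℕ} {p : ℝ}
  {Ω : Type*} [MeasurableSpace Ω] {P : Measure Ω}

/-- The position `w n = g n ⋯ g 1` of the walk at time `n`. -/
def pos (E : ERW G d p Ω P) : ℕ → Ω → G
  | 0 => fun _ => 1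
  | n + 1 => fun ω => E.g (n + 1) ω * E.pos n ω

/-- `Δ n`: the (word-metric) distance of the walker from the root at time `n`. -/
def dist (E : ERW G d p Ω P) (n : ℕ) (ω : Ω) : ℕ :=
  (cayleyGraph E.S).dist 1 (E.pos n ω)

/-- `N n a`: the number of `a`-steps taken by time `n`. -/
def count (E : ERW G d p Ω P) (a : G) (n : ℕ) (ω : Ω) : ℕ :=
  ((Finset.Icc 1 n).filter fun k => E.g k ω = a).card

/-- `γ n`: the unique step decreasing the distance to the root by 1
(a junk value if the walker is at the root). -/
def gammaStep (E : ERW G d p Ω P) (n : ℕ) (ω : Ω) : G :=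
  @Classical.epsilon G ⟨1⟩ fun s =>
    s ∈ E.S ∧ (cayleyGraph E.S).dist 1 (s * E.pos n ω) + 1 = E.dist n ω

/-- `ℓ n = N n (γ n)` if the walker is away from the root, and `0` otherwise. -/
def ell (E : ERW G d p Ω P) (n : ℕ) (ω : Ω) : ℕ :=
  if E.pos n ω = 1 then 0 else E.count (E.gammaStep n ω) n ω

/-- `Ξ n = (1/n) ∑_{k=0}^{n-1} (ℓ k / k - 1(Δ k > 0)/d)` (with the convention
`ℓ 0 / 0 = 0`, automatic since division by zero yields zero). -/
def Xi (E : ERW G d p Ω P) (n : ℕ) (ω : Ω) : ℝ :=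
  (1 / n) * ∑ k ∈ Finset.range n,
    ((E.ell k ω : ℝ) / k - (if 0 < E.dist k ω then 1 else 0) / d)

/-- The natural filtration `F n` generated by the steps up to time `n`. -/
def filt (E : ERW G d p Ω P) (n : ℕ) : MeasurableSpace Ω :=
  ⨆ k ∈ Finset.Icc 1 n, MeasurableSpace.comap (E.g k) ⊤

/-- `G n = E[Δ (n+1) - Δ n | F n]`. -/
def drift (E : ERW G d p Ω P) (n : ℕ) : Ω → ℝ :=
  P[fun ω => ((E.dist (n + 1) ω : ℝ) - (E.dist n ω : ℝ)) | E.filt n]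

/-- The martingale differences `Y k = Δ k - Δ (k-1) - G (k-1)`. -/
def mdiff (E : ERW G d p Ω P) (k : ℕ) (ω : Ω) : ℝ :=
  (E.dist k ω : ℝ) - (E.dist (k - 1) ω : ℝ) - E.drift (k - 1) ω

/-- The martingale `M n = ∑_{k=1}^n Y k`. -/
def mart (E : ERW G d p Ω P) (n : ℕ) (ω : Ω) : ℝ :=
  ∑ k ∈ Finset.Icc 1 n, E.mdiff k ω

end ERW

/-- The rate `r n`: `√n` in the subcritical regime `p < p_d = (d+1)/(2d)`,
`√(n / log n)` in the critical regime `p = p_d`, and `n ^ (d(1-p)/(d-1))` in the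
supercritical regime `p > p_d`. -/
def rate (p : ℝ) (d : ℕ) (n : ℕ) : ℝ :=
  if p < ((d : ℝ) + 1) / (2 * d) then Real.sqrt n
  else if p = ((d : ℝ) + 1) / (2 * d) then Real.sqrt ((n : ℝ) / Real.log n)
  else (n : ℝ) ^ ((d : ℝ) * (1 - p) / ((d : ℝ) - 1))

namespace ERW

variable {G : Type*} [Group G] [DecidableEq G] {d : ℕ} {p : ℝ}
  {Ω : Type*} [MeasurableSpace Ω] {P : Measure Ω}

lemma count_succ (E : ERW G d p Ω P) (a : G) (n : ℕ) (ω : Ω) :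
    E.count a (n + 1) ω = E.count a n ω + if E.g (n + 1) ω = a then 1 else 0 := by
  unfold count
  have hI : Finset.Icc 1 (n + 1) = insert (n + 1) (Finset.Icc 1 n) := by
    ext k; simp only [Finset.mem_Icc, Finset.mem_insert]; omega
  rw [hI, Finset.filter_insert]
  split_ifs with h
  · rw [Finset.card_insert_of_notMem (by simp)]
  · simp

lemma count_le (E : ERW G d p Ω P) (a : G) (n : ℕ) (ω : Ω) : E.count a n ω ≤ n := by
  unfold count
  calc _ ≤ (Finset.Icc 1 n).card := Finset.card_filter_le _ _
    _ = n := by simp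

lemma measurable_count (E : ERW G d p Ω P) (a : G) (n : ℕ) : Measurable (E.count a n) := by
  induction n with
  | zero => 
    have : E.count a 0 = fun _ => 0 := by funext ω; simp [count]
    rw [this]; exact measurable_const
  | succ n ih =>
    have : E.count a (n + 1) = fun ω => E.count a n ω + if E.g (n + 1) ω = a then 1 else 0 := by
      funext ω; exact E.count_succ a n ω
    rw [this]
    exact ih.add (Measurable.ite (E.meas_g _ _) measurable_const measurable_const)

lemma integrable_count [IsProbabilityMeasure P] (E : ERW G d p Ω P) (a : G) (n : ℕ)
    (φ : ℕ → ℝ) : Integrable (fun ω => φ (E.count a n ω)) P := by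
  refine Integrable.of_bound (C := ∑ k ∈ Finset.range (n + 1), |φ k|)
    ((measurable_from_nat (f := φ)).comp (E.measurable_count a n)).aestronglyMeasurable ?_
  refine Eventually.of_forall fun ω => ?_
  rw [Real.norm_eq_abs]
  exact Finset.single_le_sum (f := fun k => |φ k|) (fun k _ => abs_nonneg _)
    (Finset.mem_range.2 (Nat.lt_succ_of_le (E.count_le a n ω)))

/-- Extension of a finite sequence of steps. -/
def ext (E : ERW G d p Ω P) (n : ℕ) (t : Finset.Icc 1 n → E.S) (k : ℕ) : G :=
  if h : k ∈ Finset.Icc 1 n then (t ⟨k, h⟩ : G) else 1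

/-- Cylinder sets. -/
def cyl (E : ERW G d p Ω P) (n : ℕ) (t : Finset.Icc 1 n → E.S) : Set Ω :=
  {ω | ∀ k ∈ Finset.Icc 1 n, E.g k ω = E.ext n t k}

lemma meas_cyl (E : ERW G d p Ω P) (n : ℕ) (t : Finset.Icc 1 n → E.S) :
    MeasurableSet (E.cyl n t) := by
  have : E.cyl n t = ⋂ k ∈ Finset.Icc 1 n, {ω | E.g k ω = E.ext n t k} := by
    ext ω; simp [cyl]
  rw [this]
  exact Finset.measurableSet_biInter _ fun k _ => E.meas_g _ _

lemma cyl_disj (E : ERW G d p Ω P) (n : ℕ) : Pairwise (Function.onFun Disjoint (E.cyl n)) := by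
  intro t t' htt
  rw [Function.onFun, Set.disjoint_left]
  intro ω h h'
  apply htt
  funext ⟨k, hk⟩
  have := (h k hk).symm.trans (h' k hk)
  simp only [ext, hk, dif_pos] at this
  exact Subtype.ext this

lemma cyl_union (E : ERW G d p Ω P) (n : ℕ) : (⋃ t, E.cyl n t) = Set.univ := by
  refine Set.eq_univ_of_forall fun ω => Set.mem_iUnion.2
    ⟨fun k => ⟨E.g k ω, E.mem_S _ (Finset.mem_Icc.1 k.2).1 ω⟩, fun k hk => ?_⟩
  simp only [ext, hk, dif_pos]

lemma count_cyl (E : ERW G d p Ω P) (n : ℕ) (t : Finset.Icc 1 n → E.S) (a : G) {ω : Ω}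
    (h : ω ∈ E.cyl n t) :
    E.count a n ω = ((Finset.Icc 1 n).filter fun k => E.ext n t k = a).card := by
  unfold count
  congr 1
  refine Finset.filter_congr fun k hk => ?_
  rw [h k hk]

/-- transition probability -/
def tq (d : ℕ) (p : ℝ) (n : ℕ) (N : ℕ) : ℝ :=
  p * ((N : ℝ) / n) + (1 - p) / ((d : ℝ) - 1) * (((n : ℝ) - N) / n)

lemma integral_step [IsProbabilityMeasure P] (E : ERW G d p Ω P) {a : G} (ha : a ∈ E.S) {n : ℕ}
    (hn : 1 ≤ n) (φ : ℕ → ℝ) :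
    ∫ ω, {ω | E.g (n + 1) ω = a}.indicator (fun ω => φ (E.count a n ω)) ω ∂P
      = ∫ ω, tq d p n (E.count a n ω) * φ (E.count a n ω) ∂P := by
  have hI := E.integrable_count a n φ
  have hI2 := E.integrable_count a n (fun N => tq d p n N * φ N)
  rw [← setIntegral_univ, ← setIntegral_univ (μ := P) (f := fun ω => tq d p n _ * _),
    ← E.cyl_union n,
    integral_iUnion_fintype (E.meas_cyl n) (E.cyl_disj n)
      (fun t => (hI.indicator (E.meas_g _ _)).integrableOn),
    integral_iUnion_fintype (E.meas_cyl n) (E.cyl_disj n) (fun t => hI2.integrableOn)]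
  refine Finset.sum_congr rfl fun t _ => ?_
  set N := ((Finset.Icc 1 n).filter fun k => E.ext n t k = a).card with hN
  have c1 : Set.EqOn ({ω | E.g (n + 1) ω = a}.indicator (fun ω => φ (E.count a n ω)))
      ({ω | E.g (n + 1) ω = a}.indicator (fun _ => φ N)) (E.cyl n t) := by
    intro ω hω
    simp only [Set.indicator]; rw [E.count_cyl n t a hω]
  have c2 : Set.EqOn (fun ω => tq d p n (E.count a n ω) * φ (E.count a n ω))
      (fun _ => tq d p n N * φ N) (E.cyl n t) := by
    intro ω hω
    simp only; rw [E.count_cyl n t a hω]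
  rw [setIntegral_congr_fun (E.meas_cyl n t) c1, setIntegral_congr_fun (E.meas_cyl n t) c2,
    setIntegral_indicator (E.meas_g _ _), setIntegral_const, setIntegral_const]
  have := E.update n hn (E.ext n t) a ha
  simp only [smul_eq_mul, measureReal_def]
  change (P (E.cyl n t ∩ _)).toReal = tq d p n N * (P (E.cyl n t)).toReal at this
  rw [this]; ring

lemma tq_bounds (hd : 3 ≤ d) (hp0 : 0 ≤ p) (hp1 : p < 1) {n N : ℕ} (hn : 1 ≤ n) (hN : N ≤ n) :
    0 ≤ tq d p n N ∧ tq d p n N ≤ 1 := by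
  have hd' : (3 : ℝ) ≤ d := by exact_mod_cast hd
  have hn' : (1 : ℝ) ≤ n := by exact_mod_cast hn
  have hN' : (N : ℝ) ≤ n := by exact_mod_cast hN
  have h1 : 0 ≤ (1 - p) / ((d : ℝ) - 1) := div_nonneg (by linarith) (by linarith)
  have h2 : (1 - p) / ((d : ℝ) - 1) ≤ 1 := by rw [div_le_one (by linarith)]; linarith
  have hx0 : 0 ≤ (N : ℝ) / n := by positivity
  have hx : ((n : ℝ) - N) / n = 1 - (N : ℝ) / n := by field_simp
  have hx1 : (N : ℝ) / n ≤ 1 := by rw [div_le_one (by linarith)]; exact hN'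
  unfold tq
  rw [hx]
  constructor
  · have := mul_nonneg hp0 hx0
    have := mul_nonneg h1 (sub_nonneg.2 hx1)
    linarith
  · have := mul_le_mul_of_nonneg_right hp1.le hx0
    have := mul_le_mul_of_nonneg_right h2 (sub_nonneg.2 hx1)
    linarith

/-- the exponent -/
def be (d : ℕ) (p : ℝ) : ℝ := (d * p - 1) / ((d : ℝ) - 1)

/-- centered count -/
def cX (E : ERW G d p Ω P) (a : G) (n : ℕ) (ω : Ω) : ℝ := (E.count a n ω : ℝ) - n / d

lemma integrable_exp_cX [IsProbabilityMeasure P] (E : ERW G d p Ω P) (a : G) (n : ℕ) (θ : ℝ) :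
    Integrable (fun ω => Real.exp (θ * E.cX a n ω)) P :=
  E.integrable_count a n (fun N => Real.exp (θ * ((N : ℝ) - n / d)))

lemma mgf_step [IsProbabilityMeasure P] (E : ERW G d p Ω P) (hd : 3 ≤ d) (hp0 : 0 ≤ p)
    (hp1 : p < 1) {a : G} (ha : a ∈ E.S) {n : ℕ} (hn : 1 ≤ n) {θ : ℝ} (hθ : |θ| ≤ 1) :
    ∫ ω, Real.exp (θ * E.cX a (n + 1) ω) ∂P
      ≤ Real.exp (θ ^ 2) * ∫ ω, Real.exp (θ * (1 + be d p / n) * E.cX a n ω) ∂P := by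
  have hd' : (3 : ℝ) ≤ d := by exact_mod_cast hd
  have hn' : (1 : ℝ) ≤ n := by exact_mod_cast hn
  set φ : ℕ → ℝ := fun N => Real.exp (θ * ((N : ℝ) - (n + 1) / d)) with hφ
  have hI := E.integrable_count a n φ
  have e1 : ∀ ω, Real.exp (θ * E.cX a (n + 1) ω) = φ (E.count a n ω) +
      (Real.exp θ - 1) * {ω | E.g (n + 1) ω = a}.indicator (fun ω => φ (E.count a n ω)) ω := by
    intro ω
    simp only [cX, hφ, E.count_succ, Set.indicator, Set.mem_ofPred_eq]
    split_ifs with h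
    · push_cast
      rw [show θ * ((E.count a n ω : ℝ) + 1 - (n + 1) / d)
        = θ + θ * ((E.count a n ω : ℝ) - (n + 1) / d) by ring, Real.exp_add]
      ring
    · push_cast; simp
  simp_rw [e1]
  rw [integral_add hI ((hI.indicator (E.meas_g _ _)).const_mul _), integral_const_mul,
    E.integral_step ha hn, ← integral_const_mul, ← integral_add hI
      ((E.integrable_count a n (fun N => tq d p n N * φ N)).const_mul _), ← integral_const_mul]
  refine integral_mono
    (hI.add ((E.integrable_count a n (fun N => tq d p n N * φ N)).const_mul _))
    ((E.integrable_exp_cX a n _).const_mul _) fun ω => ?_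
  simp only
  obtain ⟨q0, q1⟩ := tq_bounds hd hp0 hp1 hn (E.count_le a n ω)
  set q := tq d p n (E.count a n ω) with hq
  have h1 : Real.exp θ - 1 ≤ θ + θ ^ 2 := by
    have := (abs_le.1 (Real.abs_exp_sub_one_sub_id_le hθ)).2; linarith
  have h2 : 1 + (Real.exp θ - 1) * q ≤ Real.exp (q * θ + θ ^ 2) := by
    have a1 := mul_le_mul_of_nonneg_right h1 q0
    have a2 := mul_le_mul_of_nonneg_left q1 (sq_nonneg θ)
    have a3 := Real.add_one_le_exp (q * θ + θ ^ 2)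
    nlinarith
  have h3 : q - 1 / d = be d p / n * E.cX a n ω := by
    rw [hq, tq, be, cX]
    have : (d : ℝ) - 1 ≠ 0 := by linarith
    field_simp
    ring
  calc φ (E.count a n ω) + (Real.exp θ - 1) * (q * φ (E.count a n ω))
      = (1 + (Real.exp θ - 1) * q) * φ (E.count a n ω) := by ring
    _ ≤ Real.exp (q * θ + θ ^ 2) * φ (E.count a n ω) :=
        mul_le_mul_of_nonneg_right h2 (Real.exp_pos _).le
    _ = _ := by
        rw [hφ]
        simp only
        rw [← Real.exp_add, ← Real.exp_add]
        congr 1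
        have : q = 1 / d + be d p / n * E.cX a n ω := by linarith
        rw [this]
        simp only [cX]
        ring

/-- normalising sequence -/
def An (b : ℝ) (n : ℕ) : ℝ := ∏ k ∈ Finset.range n, (1 + b / k)

lemma An_succ (b : ℝ) (n : ℕ) : An b (n + 1) = An b n * (1 + b / n) := Finset.prod_range_succ _ _

lemma An_one (b : ℝ) : An b 1 = 1 := by simp [An]

lemma An_pos {b : ℝ} (hb : 0 < b) (n : ℕ) : 0 < An b n :=
  Finset.prod_pos fun k _ => by positivity

lemma An_ge {b : ℝ} (hb : 0 < b) (hb1 : b ≤ 1) (n : ℕ) : (n : ℝ) ^ b ≤ An b n := by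
  induction n with
  | zero => simp [An, Real.zero_rpow hb.ne']
  | succ n ih =>
    rcases Nat.eq_zero_or_pos n with rfl | hn
    · simp [An_one]
    · have hn' : (0 : ℝ) < n := by exact_mod_cast hn
      rw [An_succ]
      have : ((n + 1 : ℕ) : ℝ) = n * (1 + 1 / n) := by push_cast; field_simp
      rw [this, Real.mul_rpow hn'.le (by positivity)]
      have h2 := rpow_one_add_le_one_add_mul_self (s := 1 / (n : ℝ))
        (by have : 0 < 1 / (n : ℝ) := by positivity
            linarith) hb.le hb1
      rw [mul_one_div] at h2
      exact mul_le_mul ih h2 (by positivity) (An_pos hb n).le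

lemma An_ge_one {b : ℝ} (hb : 0 < b) (n : ℕ) : 1 ≤ An b n := by
  induction n with
  | zero => simp [An]
  | succ n ih =>
    rw [An_succ]
    exact one_le_mul_of_one_le_of_one_le ih (by have : 0 ≤ b / n := by positivity
                                                linarith)

lemma An_le {b : ℝ} (hb : 0 < b) {n : ℕ} (hn : 1 ≤ n) :
    An b n ≤ Real.exp b * (n : ℝ) ^ b := by
  obtain ⟨m, rfl⟩ : ∃ m, n = m + 1 := ⟨n - 1, by omega⟩
  have hm' : (0 : ℝ) < ((m + 1 : ℕ) : ℝ) := by positivity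
  have h1 : An b (m + 1) ≤ Real.exp (b * (harmonic m : ℝ)) := by
    have : b * (harmonic m : ℝ) = ∑ k ∈ Finset.range (m + 1), b / (k : ℝ) := by
      rw [Finset.sum_range_succ', harmonic]
      push_cast
      rw [Finset.mul_sum]
      simp [div_eq_mul_inv]
    rw [this, Real.exp_sum]
    refine Finset.prod_le_prod (fun k _ => by positivity) fun k _ => ?_
    have := Real.add_one_le_exp (b / (k : ℝ))
    linarith
  have h2 : (harmonic m : ℝ) ≤ 1 + Real.log ((m + 1 : ℕ) : ℝ) := by
    rcases Nat.eq_zero_or_pos m with rfl | hm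
    · simp
    · refine (harmonic_le_one_add_log m).trans ?_
      have : Real.log (m : ℝ) ≤ Real.log ((m + 1 : ℕ) : ℝ) :=
        Real.log_le_log (by exact_mod_cast hm) (by push_cast; linarith)
      linarith
  refine h1.trans ?_
  rw [Real.rpow_def_of_pos hm', ← Real.exp_add]
  apply Real.exp_le_exp.2
  nlinarith [mul_le_mul_of_nonneg_left h2 hb.le]

lemma An_summable {b : ℝ} (hb : 1 / 2 < b) (hb1 : b ≤ 1) :
    Summable fun n : ℕ => (1 / An b n) ^ 2 := by
  refine (summable_nat_add_iff 1).1 ?_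
  have hs : Summable fun n : ℕ => 1 / (n : ℝ) ^ (2 * b) :=
    Real.summable_one_div_nat_rpow.2 (by linarith)
  refine Summable.of_nonneg_of_le (fun n => by positivity) (fun n => ?_)
    ((summable_nat_add_iff 1).2 hs)
  have hb0 : 0 < b := by linarith
  have h1 := An_ge hb0 hb1 (n + 1)
  have h0 : (0 : ℝ) < ((n + 1 : ℕ) : ℝ) ^ b := by positivity
  rw [one_div_pow, mul_comm 2 b, Real.rpow_mul (by positivity)]
  norm_cast at h0 h1 ⊢
  gcongr

lemma An_sum {b : ℝ} (n : ℕ) :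
    ∑ k ∈ Finset.range n, b * (An b k / k) = An b n - 1 := by
  induction n with
  | zero => simp [An]
  | succ n ih => rw [Finset.sum_range_succ, ih, An_succ]; ring

lemma be_bounds (hd : 3 ≤ d) (hpd : ((d : ℝ) + 1) / (2 * d) < p) (hp1 : p < 1) :
    1 / 2 < be d p ∧ be d p < 1 := by
  have hd' : (3 : ℝ) ≤ d := by exact_mod_cast hd
  rw [div_lt_iff₀ (by linarith)] at hpd
  unfold be
  constructor
  · rw [lt_div_iff₀ (by linarith)]; linarith
  · rw [div_lt_one (by linarith)]; nlinarith

lemma mgf_bound [IsProbabilityMeasure P] (E : ERW G d p Ω P) (hd : 3 ≤ d)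
    (hpd : ((d : ℝ) + 1) / (2 * d) < p) (hp1 : p < 1) :
    ∃ K : ℝ, 0 < K ∧ ∀ a ∈ E.S, ∀ n : ℕ, 1 ≤ n → ∀ σ : ℝ, |σ| = 1 →
      ∫ ω, Real.exp (σ * (1 / An (be d p) n) * E.cX a n ω) ∂P ≤ K := by
  have hd' : (3 : ℝ) ≤ d := by exact_mod_cast hd
  obtain ⟨hb, hb1⟩ := be_bounds hd hpd hp1
  have hb0 : 0 < be d p := by linarith
  have hp0 : 0 ≤ p := le_trans (by positivity) hpd.le
  set b := be d p with hbdef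
  have hs := An_summable hb hb1.le
  refine ⟨Real.exp (1 + ∑' n, (1 / An b n) ^ 2), Real.exp_pos _, fun a ha n hn σ hσ => ?_⟩
  have key : ∫ ω, Real.exp (σ * (1 / An b n) * E.cX a n ω) ∂P
      ≤ Real.exp (1 + ∑ k ∈ Finset.range (n + 1), (1 / An b k) ^ 2) := by
    induction n, hn using Nat.le_induction with
    | base =>
      have : ∀ ω, Real.exp (σ * (1 / An b 1) * E.cX a 1 ω)
          ≤ Real.exp (1 + ∑ k ∈ Finset.range (1 + 1), (1 / An b k) ^ 2) := by
        intro ω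
        apply Real.exp_le_exp.2
        have h1 : |E.cX a 1 ω| ≤ 1 := by
          have c1 : (E.count a 1 ω : ℝ) ≤ 1 := by exact_mod_cast E.count_le a 1 ω
          have c0 : (0 : ℝ) ≤ E.count a 1 ω := by positivity
          have c2 : 1 / (d : ℝ) ≤ 1 := by rw [div_le_one (by linarith)]; linarith
          have c3 : 0 ≤ 1 / (d : ℝ) := by positivity
          unfold cX
          push_cast
          rw [abs_le]; constructor <;> linarith
        have h2 : |σ * (1 / An b 1) * E.cX a 1 ω| ≤ 1 := by
          rw [An_one, abs_mul, abs_mul, hσ]; simpa using h1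
        have h3 : 0 ≤ ∑ k ∈ Finset.range (1 + 1), (1 / An b k) ^ 2 :=
          Finset.sum_nonneg fun _ _ => by positivity
        have := (abs_le.1 h2).2
        linarith
      calc _ ≤ ∫ ω, Real.exp (1 + ∑ k ∈ Finset.range (1 + 1), (1 / An b k) ^ 2) ∂P :=
            integral_mono (E.integrable_exp_cX a 1 _) (integrable_const _) this
        _ = _ := by simp
    | succ n hn ih =>
      have hA := An_pos hb0 n
      have hA1 := An_pos hb0 (n + 1)
      have hθ : |σ * (1 / An b (n + 1))| ≤ 1 := by
        rw [abs_mul, hσ, one_mul, abs_of_pos (by positivity), div_le_one hA1]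
        exact An_ge_one hb0 _
      have h1 := E.mgf_step hd hp0 hp1 ha hn hθ
      have h2 : σ * (1 / An b (n + 1)) * (1 + be d p / n) = σ * (1 / An b n) := by
        rw [An_succ, ← hbdef]
        have : (1 + b / n) ≠ 0 := by positivity
        field_simp
      rw [h2, mul_pow, ← sq_abs σ, hσ, one_pow, one_mul] at h1
      refine h1.trans ?_
      rw [Finset.sum_range_succ _ (n + 1), ← add_assoc, Real.exp_add _ ((1 / An b (n + 1)) ^ 2),
        mul_comm]
      exact mul_le_mul_of_nonneg_right ih (Real.exp_pos _).le
  refine key.trans (Real.exp_le_exp.2 ?_)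
  have := hs.sum_le_tsum (Finset.range (n + 1)) (fun _ _ => by positivity)
  linarith

lemma rpow_le_exp {m : ℝ} (hm : 0 < m) :
    ∃ C : ℝ, 0 < C ∧ ∀ x : ℝ, |x| ^ m ≤ C * (Real.exp (1 * x) + Real.exp (-1 * x)) := by
  obtain ⟨N, hN⟩ := exists_nat_ge m
  refine ⟨1 + (N.factorial : ℝ), by positivity, fun x => ?_⟩
  have h1 : |x| ^ m ≤ 1 + |x| ^ N := by
    rcases le_total |x| 1 with h | h
    · have := Real.rpow_le_one (abs_nonneg x) h hm.le
      have : 0 ≤ |x| ^ N := by positivity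
      linarith
    · have := Real.rpow_le_rpow_of_exponent_le h hN
      rw [Real.rpow_natCast] at this
      linarith
  have h2 : |x| ^ N ≤ N.factorial * Real.exp |x| := by
    have := Real.pow_div_factorial_le_exp |x| (abs_nonneg x) N
    rwa [div_le_iff₀ (by positivity), mul_comm] at this
  have h3 : 1 ≤ Real.exp |x| := Real.one_le_exp (abs_nonneg x)
  have h4 : Real.exp |x| ≤ Real.exp (1 * x) + Real.exp (-1 * x) := by
    have e1 := Real.exp_pos (1 * x)
    have e2 := Real.exp_pos (-1 * x)
    rcases abs_choice x with h | h <;> rw [h]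
    · rw [one_mul] at *; linarith
    · rw [neg_one_mul] at *; linarith
  calc |x| ^ m ≤ (1 + (N.factorial : ℝ)) * Real.exp |x| := by linarith
    _ ≤ _ := by gcongr

lemma gamma_mem (E : ERW G d p Ω P) {n : ℕ} {ω : Ω} (h : E.pos n ω ≠ 1) :
    E.gammaStep n ω ∈ E.S := by
  have hc := E.tree.connected
  have hex : ∃ s, s ∈ E.S ∧
      (cayleyGraph E.S).dist 1 (s * E.pos n ω) + 1 = E.dist n ω := by
    obtain ⟨w, hw⟩ := hc.exists_walk_length_eq_dist (E.pos n ω) 1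
    generalize hx : E.pos n ω = x at *
    generalize hy : (1 : G) = y at *
    cases w with
    | nil => exact absurd rfl h
    | @cons _ v _ hadj w =>
      subst hx hy
      rw [SimpleGraph.Walk.length_cons] at hw
      have hs : v * (E.pos n ω)⁻¹ ∈ E.S := by
        rcases hadj.2 with h1 | h1
        · exact h1
        · have := E.symm_S _ h1
          simpa using this
      refine ⟨_, hs, ?_⟩
      rw [inv_mul_cancel_right]
      have h1 : (cayleyGraph E.S).dist v 1 ≤ w.length := SimpleGraph.dist_le w
      have h2 : (cayleyGraph E.S).dist (E.pos n ω) 1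
          ≤ (cayleyGraph E.S).dist (E.pos n ω) v + (cayleyGraph E.S).dist v 1 :=
        hc.dist_triangle
      have h3 : (cayleyGraph E.S).dist (E.pos n ω) v = 1 :=
        SimpleGraph.dist_eq_one_iff_adj.2 hadj
      unfold dist
      rw [SimpleGraph.dist_comm, SimpleGraph.dist_comm (u := 1)]
      omega
  exact (Classical.epsilon_spec hex).1

/-- Terms of `Ξ`. -/
def tm (E : ERW G d p Ω P) (k : ℕ) (ω : Ω) : ℝ :=
  (E.ell k ω : ℝ) / k - (if 0 < E.dist k ω then 1 else 0) / d

lemma tm_zero (E : ERW G d p Ω P) (ω : Ω) : E.tm 0 ω = 0 := by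
  simp [tm, dist, pos]

lemma tm_bound (E : ERW G d p Ω P) {b : ℝ} (hb : 0 < b) {m : ℝ} (hm : 0 < m) (k : ℕ)
    (hk : 1 ≤ k) (ω : Ω) :
    (|E.tm k ω| / (An b k / k)) ^ m ≤ ∑ a ∈ E.S, |1 / An b k * E.cX a k ω| ^ m := by
  have hk' : (0 : ℝ) < k := by exact_mod_cast hk
  have hA := An_pos hb k
  by_cases h : E.pos k ω = 1
  · have : E.tm k ω = 0 := by simp [tm, dist, ell, h]
    rw [this]
    simp only [abs_zero, zero_div, Real.zero_rpow hm.ne']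
    exact Finset.sum_nonneg fun _ _ => by positivity
  · have hpos : 0 < E.dist k ω := E.tree.connected.pos_dist_of_ne (Ne.symm h)
    have : |E.tm k ω| / (An b k / k) = |1 / An b k * E.cX (E.gammaStep k ω) k ω| := by
      rw [abs_mul, abs_of_pos (by positivity : 0 < 1 / An b k)]
      have : E.tm k ω = E.cX (E.gammaStep k ω) k ω / k := by
        simp only [tm, ell, h, if_false, hpos, if_true, cX]
        field_simp
      rw [this, abs_div, abs_of_pos hk']
      field_simp
    rw [this]
    exact Finset.single_le_sum (f := fun a => |1 / An b k * E.cX a k ω| ^ m)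
      (fun _ _ => by positivity) (E.gamma_mem h)

lemma moment_bound [IsProbabilityMeasure P] (E : ERW G d p Ω P) (hd : 3 ≤ d)
    (hpd : ((d : ℝ) + 1) / (2 * d) < p) (hp1 : p < 1) {m : ℝ} (hm : 2 < m) :
    ∃ C : ℝ, 0 < C ∧ ∀ n : ℕ, 1 ≤ n →
      ∫ ω, |E.Xi n ω| ^ m ∂P ≤ C * (n : ℝ) ^ (-(m * (1 - be d p))) := by
  have hd' : (3 : ℝ) ≤ d := by exact_mod_cast hd
  obtain ⟨hb, hb1⟩ := be_bounds hd hpd hp1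
  have hb0 : 0 < be d p := by linarith
  have hm0 : 0 < m := by linarith
  obtain ⟨K, hK, hmgf⟩ := E.mgf_bound hd hpd hp1
  set b := be d p with hbdef
  obtain ⟨Cm, hCm, hexp⟩ := rpow_le_exp hm0
  set M : ℝ := d * (Cm * (K + K)) with hM
  have hMpos : 0 < M := by positivity
  have hInt : ∀ a k, Integrable (fun ω => |1 / An b k * E.cX a k ω| ^ m) P := fun a k =>
    E.integrable_count a k (fun N => |1 / An b k * ((N : ℝ) - k / d)| ^ m)
  have hmom : ∀ a ∈ E.S, ∀ k, 1 ≤ k →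
      ∫ ω, |1 / An b k * E.cX a k ω| ^ m ∂P ≤ Cm * (K + K) := by
    intro a ha k hk
    have i1 := E.integrable_exp_cX a k (1 * (1 / An b k))
    have i2 := E.integrable_exp_cX a k (-1 * (1 / An b k))
    calc _ ≤ ∫ ω, Cm * (Real.exp (1 * (1 / An b k) * E.cX a k ω)
            + Real.exp (-1 * (1 / An b k) * E.cX a k ω)) ∂P := by
          refine integral_mono (hInt a k) ((i1.add i2).const_mul _) fun ω => ?_
          have := hexp (1 / An b k * E.cX a k ω)
          rw [← mul_assoc, ← mul_assoc] at this
          exact this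
      _ = Cm * (∫ ω, Real.exp (1 * (1 / An b k) * E.cX a k ω) ∂P
            + ∫ ω, Real.exp (-1 * (1 / An b k) * E.cX a k ω) ∂P) := by
          rw [integral_const_mul, integral_add i1 i2]
      _ ≤ _ := by
          gcongr
          · exact hmgf a ha k hk 1 (by simp)
          · exact hmgf a ha k hk (-1) (by simp)
  refine ⟨(Real.exp b / b) ^ m * M, by positivity, fun n hn => ?_⟩
  have hn' : (0 : ℝ) < n := by exact_mod_cast hn
  set w : ℕ → ℝ := fun k => An b k / k with hw
  have hw0 : ∀ k, 0 ≤ w k := fun k => div_nonneg (An_pos hb0 k).le (by positivity)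
  set W : ℝ := ∑ k ∈ Finset.range n, w k with hW
  have hW0 : 0 ≤ W := Finset.sum_nonneg fun k _ => hw0 k
  have hWle : W ≤ Real.exp b / b * (n : ℝ) ^ b := by
    have h1 := An_sum (b := b) n
    rw [← Finset.mul_sum] at h1
    change b * W = _ at h1
    have h2 := An_le hb0 hn
    rw [div_mul_eq_mul_div, le_div_iff₀ hb0]
    linarith
  -- the pointwise bound
  have hpt : ∀ ω, |E.Xi n ω| ^ m ≤ ((n : ℝ) ^ m)⁻¹ * (W ^ (m - 1) *
      ∑ k ∈ Finset.range n, w k * ∑ a ∈ E.S, |1 / An b k * E.cX a k ω| ^ m) := by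
    intro ω
    have h1 : |E.Xi n ω| ≤ 1 / n * ∑ k ∈ Finset.range n, w k * (|E.tm k ω| / w k) := by
      have : E.Xi n ω = 1 / n * ∑ k ∈ Finset.range n, E.tm k ω := rfl
      rw [this, abs_mul, abs_of_pos (by positivity : (0 : ℝ) < 1 / n)]
      gcongr
      refine (Finset.abs_sum_le_sum_abs _ _).trans (Finset.sum_le_sum fun k _ => ?_)
      rcases Nat.eq_zero_or_pos k with rfl | hk
      · simp [E.tm_zero]
      · have hk' : (0 : ℝ) < k := by exact_mod_cast hk
        have : 0 < w k := div_pos (An_pos hb0 k) hk'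
        rw [mul_div_cancel₀ _ this.ne']
    have h2 := Real.inner_le_weight_mul_Lp_of_nonneg (Finset.range n) (p := m) (by linarith) w
      (fun k => |E.tm k ω| / w k) hw0 (fun k => div_nonneg (abs_nonneg _) (hw0 k))
    set Z := ∑ k ∈ Finset.range n, w k * (|E.tm k ω| / w k) ^ m with hZ
    have hZ0 : 0 ≤ Z := Finset.sum_nonneg fun k _ => mul_nonneg (hw0 k)
      (Real.rpow_nonneg (div_nonneg (abs_nonneg _) (hw0 k)) _)
    have h3 : |E.Xi n ω| ≤ 1 / n * (W ^ (1 - m⁻¹) * Z ^ m⁻¹) := h1.trans (by gcongr)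
    have h4 : Z ≤ ∑ k ∈ Finset.range n, w k * ∑ a ∈ E.S, |1 / An b k * E.cX a k ω| ^ m := by
      refine Finset.sum_le_sum fun k _ => ?_
      rcases Nat.eq_zero_or_pos k with rfl | hk
      · simp [hw]
      · exact mul_le_mul_of_nonneg_left (E.tm_bound hb0 hm0 k hk ω) (hw0 k)
    calc |E.Xi n ω| ^ m ≤ (1 / n * (W ^ (1 - m⁻¹) * Z ^ m⁻¹)) ^ m :=
          Real.rpow_le_rpow (abs_nonneg _) h3 hm0.le
      _ = ((n : ℝ) ^ m)⁻¹ * (W ^ (m - 1) * Z) := by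
          rw [Real.mul_rpow (by positivity) (by positivity),
            Real.mul_rpow (by positivity) (by positivity), ← Real.rpow_mul hW0,
            ← Real.rpow_mul hZ0, inv_mul_cancel₀ hm0.ne', Real.rpow_one, one_div,
            Real.inv_rpow hn'.le, sub_mul, inv_mul_cancel₀ hm0.ne', one_mul]
      _ ≤ _ := by gcongr
  have hIk : ∀ k, Integrable (fun ω => w k * ∑ a ∈ E.S, |1 / An b k * E.cX a k ω| ^ m) P :=
    fun k => (integrable_finsetSum _ fun a _ => hInt a k).const_mul _
  have hIsum : Integrable (fun ω => ((n : ℝ) ^ m)⁻¹ * (W ^ (m - 1) *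
      ∑ k ∈ Finset.range n, w k * ∑ a ∈ E.S, |1 / An b k * E.cX a k ω| ^ m)) P :=
    ((integrable_finsetSum _ fun k _ => hIk k).const_mul _).const_mul _
  calc ∫ ω, |E.Xi n ω| ^ m ∂P ≤ _ :=
        integral_mono_of_nonneg (Eventually.of_forall fun ω => by positivity) hIsum
          (Eventually.of_forall hpt)
    _ = ((n : ℝ) ^ m)⁻¹ * (W ^ (m - 1) *
      ∑ k ∈ Finset.range n, w k * ∑ a ∈ E.S, ∫ ω, |1 / An b k * E.cX a k ω| ^ m ∂P) := by
        rw [integral_const_mul, integral_const_mul, integral_finsetSum _ fun k _ => hIk k]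
        simp_rw [integral_const_mul]
        congr 2
        refine Finset.sum_congr rfl fun k _ => ?_
        rw [integral_finsetSum _ fun a _ => hInt a k]
    _ ≤ ((n : ℝ) ^ m)⁻¹ * (W ^ (m - 1) * ∑ k ∈ Finset.range n, w k * M) := by
        refine mul_le_mul_of_nonneg_left (mul_le_mul_of_nonneg_left
          (Finset.sum_le_sum fun k _ => ?_) (by positivity)) (by positivity)
        rcases Nat.eq_zero_or_pos k with rfl | hk
        · simp [hw]
        · refine mul_le_mul_of_nonneg_left ?_ (hw0 k)
          refine (Finset.sum_le_sum fun a ha => hmom a ha k hk).trans ?_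
          rw [Finset.sum_const, E.card_S, nsmul_eq_mul]
    _ = ((n : ℝ) ^ m)⁻¹ * (W ^ m * M) := by
        rw [← Finset.sum_mul, ← mul_assoc (W ^ (m - 1))]
        congr 2
        rcases hW0.eq_or_lt with h | h
        · rw [← hW, ← h, Real.zero_rpow hm0.ne', mul_zero]
        · rw [← hW, Real.rpow_sub_one h.ne', div_mul_cancel₀ _ h.ne']
    _ ≤ ((n : ℝ) ^ m)⁻¹ * ((Real.exp b / b * (n : ℝ) ^ b) ^ m * M) := by gcongr
    _ = _ := by
        rw [Real.mul_rpow (by positivity) (by positivity), ← Real.rpow_mul hn'.le,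
          ← Real.rpow_neg hn'.le,
          show -(m * (1 - b)) = -m + b * m by ring, Real.rpow_add hn']
        ring

end ERW

/-- higher moments of `Ξ n` in the supercritical regime
`p ∈ (p_d, 1)`, for `m > 2`: `E|Ξ n|^m ≤ C n^(-m d(1-p)/(d-1)) log n` if
`2 < m < (d-1)/(d(1-p))`; `E|Ξ n|^m ≤ C log n / n` if `m = (d-1)/(d(1-p))`;
and `E|Ξ n|^m ≤ C / n` if `m > (d-1)/(d(1-p))`. -/
theorem erw_Xi_high_moments_supercritical
    {G : Type*} [Group G] [DecidableEq G] {Ω : Type*} [MeasurableSpace Ω]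
    {P : Measure Ω} [IsProbabilityMeasure P]
    (d : ℕ) (hd : 3 ≤ d) (p : ℝ) (hpd : ((d : ℝ) + 1) / (2 * d) < p) (hp1 : p < 1)
    (E : ERW G d p Ω P) (m : ℝ) (hm : 2 < m) :
    (m < ((d : ℝ) - 1) / ((d : ℝ) * (1 - p)) →
      ∃ C : ℝ, 0 < C ∧ ∀ n : ℕ, 2 ≤ n →
        ∫ ω, |E.Xi n ω| ^ m ∂P ≤
          C * (n : ℝ) ^ (-(m * ((d : ℝ) * (1 - p) / ((d : ℝ) - 1)))) *
            Real.log n) ∧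
    (m = ((d : ℝ) - 1) / ((d : ℝ) * (1 - p)) →
      ∃ C : ℝ, 0 < C ∧ ∀ n : ℕ, 2 ≤ n →
        ∫ ω, |E.Xi n ω| ^ m ∂P ≤ C * Real.log n / n) ∧
    (((d : ℝ) - 1) / ((d : ℝ) * (1 - p)) < m →
      ∃ C : ℝ, 0 < C ∧ ∀ n : ℕ, 1 ≤ n →
        ∫ ω, |E.Xi n ω| ^ m ∂P ≤ C / n) := by
  have hd' : (3 : ℝ) ≤ d := by exact_mod_cast hd
  obtain ⟨C, hC, hbound⟩ := E.moment_bound hd hpd hp1 hm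
  have hα : 1 - ERW.be d p = (d : ℝ) * (1 - p) / ((d : ℝ) - 1) := by
    have : (d : ℝ) - 1 ≠ 0 := by linarith
    unfold ERW.be
    field_simp
    ring
  rw [hα] at hbound
  set α := (d : ℝ) * (1 - p) / ((d : ℝ) - 1) with hαdef
  have hα0 : 0 < α := div_pos (mul_pos (by linarith) (by linarith)) (by linarith)
  have hinv : ((d : ℝ) - 1) / ((d : ℝ) * (1 - p)) = α⁻¹ := by rw [hαdef, inv_div]
  rw [hinv]
  have hl2 : 0 < Real.log 2 := Real.log_pos (by norm_num)
  have hlog : ∀ n : ℕ, 2 ≤ n → 1 ≤ Real.log n / Real.log 2 := by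
    intro n hn
    rw [one_le_div hl2]
    exact Real.log_le_log (by norm_num) (by exact_mod_cast hn)
  refine ⟨fun _ => ⟨C / Real.log 2, by positivity, fun n hn => ?_⟩,
    fun h => ⟨C / Real.log 2, by positivity, fun n hn => ?_⟩,
    fun h => ⟨C, hC, fun n hn => ?_⟩⟩
  · refine (hbound n (by omega)).trans ?_
    calc C * (n : ℝ) ^ (-(m * α)) = C * (n : ℝ) ^ (-(m * α)) * 1 := by ring
      _ ≤ C * (n : ℝ) ^ (-(m * α)) * (Real.log n / Real.log 2) := by
        gcongr; exact hlog n hn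
      _ = _ := by ring
  · refine (hbound n (by omega)).trans ?_
    rw [h, inv_mul_cancel₀ hα0.ne', Real.rpow_neg_one]
    calc C * (n : ℝ)⁻¹ = C * (n : ℝ)⁻¹ * 1 := by ring
      _ ≤ C * (n : ℝ)⁻¹ * (Real.log n / Real.log 2) := by
        gcongr; exact hlog n hn
      _ = _ := by ring
  · refine (hbound n hn).trans ?_
    rw [div_eq_mul_inv]
    gcongr
    rw [← Real.rpow_neg_one]
    refine Real.rpow_le_rpow_of_exponent_le (by exact_mod_cast hn) ?_
    have : 1 < m * α := by
      rw [inv_lt_iff_one_lt_mul₀ hα0] at h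
      linarith
    linarith

end
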